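/- Let v¹ and v² be infinite words over {0,1} with v¹ amicable with v² (v¹ ∝ v²), and let Γ denote the shift Γ(u_0 u_1 u_2 ⋯) = u_1 u_2 u_3 ⋯. Then for every i ∈ ℕ, at least one of the following holds: Γ^i(v¹) ∝ Γ^i(v²), or Γ^{i+1}(v¹) ∝ Γ^{i+1}(v²). -/

import Mathlib

/-!
Let `w` be the ternarization of the pair. For each letter `a`, the blocks `σ01(a)` and `σ10(a)`
have the same length, which is 1 or 2. Hence deleting the first letter of `w` deletes the same
number of letters, one or two, from both words, and leaves an amicable pair
(`AmicableInf.shift_one_or_two`, resting on `morphWord_add_length`). The positions where both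
words can be cut simultaneously thus have gaps at most 2, so among any two consecutive positions
`i`, `i + 1` there is a cut; this is a strong induction on `i`.
-/

/-- The alphabet of 3iet words. -/
inductive L3 | A | B | C
deriving DecidableEq, Inhabited

/-- The three-interval exchange transformation `T_{ε,ℓ}`. -/
noncomputable def T3 (ε ℓ : ℝ) (x : ℝ) : ℝ :=
  if x < ℓ - 1 + ε then x + 1 - ε
  else if x < ε then x + 1 - 2*ε
  else x - ε

/-- The 3iet word `u_{ε,ℓ,x0}` coding the orbit of `x0` under `T_{ε,ℓ}`. -/
noncomputable def u3 (ε ℓ x0 : ℝ) (n : ℕ) : L3 :=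
  if (T3 ε ℓ)^[n] x0 < ℓ - 1 + ε then L3.A
  else if (T3 ε ℓ)^[n] x0 < ε then L3.B
  else L3.C

/-- The two-interval exchange transformation `T_ε`. -/
noncomputable def T2 (ε : ℝ) (x : ℝ) : ℝ := if x < ε then x + 1 - ε else x - ε

/-- The Sturmian word `u_{ε,x0}` of slope `ε` coding the orbit of `x0` under `T_ε`
(letter `0` is `false`, letter `1` is `true`). -/
noncomputable def u2 (ε x0 : ℝ) (n : ℕ) : Bool := if (T2 ε)^[n] x0 < ε then false else true

/-- `w` is a factor of the infinite word `u`. -/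
def IsFactor {α : Type*} (w : List α) (u : ℕ → α) : Prop :=
  ∃ i : ℕ, w = (List.range w.length).map fun j => u (i + j)

/-- The prefix of length `m` of the periodic infinite word `www⋯`;
for `|w| ≤ m` this is the fractional power `w^{m/|w|}`. -/
def powPrefix {α : Type*} [Inhabited α] (w : List α) (m : ℕ) : List α :=
  (List.range m).map fun j => w.getD (j % w.length) default

/-- The index of the factor `w` in the infinite word `u`:
`sup {r ∈ ℚ, r ≥ 1, r|w| ∈ ℕ | w^r is a factor of u}`, as an element of `ℝ ∪ {+∞}`. -/
noncomputable def factorIndex {α : Type*} [Inhabited α] (u : ℕ → α) (w : List α) : EReal :=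
  sSup {x : EReal | ∃ m : ℕ, w.length ≤ m ∧ IsFactor (powPrefix w m) u ∧
    x = (((m : ℝ) / (w.length : ℝ) : ℝ) : EReal)}

/-- The index of the infinite word `u`: `sup {ind(w) | w a nonempty factor of u}`. -/
noncomputable def wordIndex {α : Type*} [Inhabited α] (u : ℕ → α) : EReal :=
  sSup {x : EReal | ∃ w : List α, w ≠ [] ∧ IsFactor w u ∧ x = factorIndex u w}

/-- The Gauss map `x ↦ {1/x}`. -/
noncomputable def gaussMap (x : ℝ) : ℝ := Int.fract x⁻¹

/-- `cfa ε n` is the partial quotient `a_{n+1}` of the continued fraction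
expansion `ε = [0; a₁, a₂, a₃, …]` of the irrational `ε ∈ (0,1)`. -/
noncomputable def cfa (ε : ℝ) (n : ℕ) : ℕ := ⌊(gaussMap^[n] ε)⁻¹⌋₊

/-- The morphism `σ01 : A ↦ 0, B ↦ 01, C ↦ 1`. -/
def sigma01 : L3 → List Bool
  | L3.A => [false]
  | L3.B => [false, true]
  | L3.C => [true]

/-- The morphism `σ10 : A ↦ 0, B ↦ 10, C ↦ 1`. -/
def sigma10 : L3 → List Bool
  | L3.A => [false]
  | L3.B => [true, false]
  | L3.C => [true]

/-- The image `φ(u₀)φ(u₁)φ(u₂)⋯` of an infinite word `u` under a (nonerasing) morphism `φ`. -/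
def morphWord (φ : L3 → List Bool) (u : ℕ → L3) (m : ℕ) : Bool :=
  ((List.range (m+1)).flatMap fun k => φ (u k)).getD m false

/-- `u` is a uniformly recurrent infinite word: every factor occurs infinitely often
with bounded gaps (every window of some length `R` contains an occurrence). -/
def UniformlyRecurrent {α : Type*} (u : ℕ → α) : Prop :=
  ∀ w : List α, IsFactor w u → ∃ R : ℕ, ∀ i : ℕ, ∃ j : ℕ, i ≤ j ∧ j < i + R ∧
    w = (List.range w.length).map fun t => u (j + t)

/-- `u` is eventually periodic. -/
def EventuallyPeriodic {α : Type*} (u : ℕ → α) : Prop :=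
  ∃ N p : ℕ, 0 < p ∧ ∀ n : ℕ, N ≤ n → u (n + p) = u n

/-- The standard words of `ε = [0; a₁, a₂, …]`, with the index shifted by one:
`sw ε 0 = s₋₁ = 1`, `sw ε 1 = s₀ = 0`, `sw ε 2 = s₁ = s₀^{a₁-1} s₋₁`, and
`sw ε (n+3) = s_{n+2} = s_{n+1}^{a_{n+2}} s_n`. -/
noncomputable def sw (ε : ℝ) : ℕ → List Bool
  | 0 => [true]
  | 1 => [false]
  | 2 => (List.replicate (cfa ε 0 - 1) ([false] : List Bool)).flatten ++ [true]
  | (n+3) => (List.replicate (cfa ε (n+1)) (sw ε (n+2))).flatten ++ sw ε (n+1)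

/-- Denominators of the convergents of `ε`, shifted by one: `qq ε 0 = q₋₁ = 0`,
`qq ε 1 = q₀ = 1`, and `qq ε (n+2) = q_{n+1} = a_{n+1} q_n + q_{n-1}`. -/
noncomputable def qq (ε : ℝ) : ℕ → ℕ
  | 0 => 0
  | 1 => 1
  | (n+2) => cfa ε n * qq ε (n+1) + qq ε n

/-- `u` is a 3iet word. -/
def Is3ietWord (u : ℕ → L3) : Prop :=
  ∃ ε ℓ x0 : ℝ, Irrational ε ∧ 0 < ε ∧ ε < 1 ∧ max ε (1 - ε) < ℓ ∧ ℓ < 1 ∧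
    x0 ∈ Set.Ico 0 ℓ ∧ u = u3 ε ℓ x0

/-- `v` is a Sturmian word. -/
def IsSturmianWord (v : ℕ → Bool) : Prop :=
  ∃ ε x0 : ℝ, Irrational ε ∧ 0 < ε ∧ ε < 1 ∧ x0 ∈ Set.Ico (0:ℝ) 1 ∧ v = u2 ε x0

/-- The infinite binary word `v1` is amicable with `v2` (`v1 ∝ v2`). -/
def AmicableInf (v1 v2 : ℕ → Bool) : Prop :=
  ∃ w : ℕ → L3, v1 = morphWord sigma01 w ∧ v2 = morphWord sigma10 w

/-- The morphism `Φ_k : A ↦ 0, B ↦ 01^{k+1}, C ↦ 01^k`. -/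
def Phi (k : ℕ) : L3 → List Bool
  | L3.A => [false]
  | L3.B => false :: List.replicate (k+1) true
  | L3.C => false :: List.replicate k true

/-- The infinite word `B₀B₁B₂⋯` obtained by concatenating the sequence of
(nonempty) blocks `B`. -/
def concatOfBlocks (B : ℕ → List Bool) (m : ℕ) : Bool :=
  ((List.range (m+1)).flatMap B).getD m false

/-- The first `m + 1` blocks already determine the letter at position `m`, since no block
is empty; further blocks do not change it. -/
lemma morphWord_eq_of_le (φ : L3 → List Bool) (hφ : ∀ a, 1 ≤ (φ a).length) (u : ℕ → L3)
    (m d : ℕ) :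
    ((List.range (m + 1 + d)).flatMap fun k => φ (u k)).getD m false = morphWord φ u m := by
  have hlen : ∀ n, n ≤ ((List.range n).flatMap fun k => φ (u k)).length := by
    intro n
    induction n with
    | zero => simp
    | succ n ih =>
      rw [List.range_succ, List.flatMap_append, List.length_append]
      have := hφ (u n)
      simp only [List.flatMap_cons, List.flatMap_nil, List.append_nil]
      omega
  unfold morphWord
  rw [List.range_add, List.flatMap_append, List.getD_append]
  exact hlen (m + 1)

/-- Deleting the first block of `φ(u)` gives the image of the shifted word. -/
lemma morphWord_add_length (φ : L3 → List Bool) (hφ : ∀ a, 1 ≤ (φ a).length) (u : ℕ → L3)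
    (m : ℕ) :
    morphWord φ u (m + (φ (u 0)).length) = morphWord φ (fun n => u (n + 1)) m := by
  obtain ⟨d, hd⟩ := Nat.exists_eq_add_of_le (hφ (u 0))
  rw [← morphWord_eq_of_le φ hφ (fun n => u (n + 1)) m d]
  unfold morphWord
  rw [List.range_succ_eq_map, List.flatMap_cons, List.getD_append_right _ _ _ _ (by omega),
    List.flatMap_map, Nat.add_sub_cancel, hd, Nat.add_assoc]

/-- Deleting the first letter of the ternarization deletes one letter from both words
(letter `A` or `C`) or two letters from both words (letter `B`). -/
lemma AmicableInf.shift_one_or_two {v1 v2 : ℕ → Bool} (h : AmicableInf v1 v2) :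
    AmicableInf (fun n => v1 (n + 1)) (fun n => v2 (n + 1)) ∨
      AmicableInf (fun n => v1 (n + 2)) (fun n => v2 (n + 2)) := by
  obtain ⟨w, rfl, rfl⟩ := h
  have h01 := morphWord_add_length sigma01 (by rintro (_ | _ | _) <;> decide) w
  have h10 := morphWord_add_length sigma10 (by rintro (_ | _ | _) <;> decide) w
  cases hw : w 0 <;> rw [hw] at h01 h10
  · exact Or.inl ⟨_, funext h01, funext h10⟩
  · exact Or.inr ⟨_, funext h01, funext h10⟩
  · exact Or.inl ⟨_, funext h01, funext h10⟩

/-- if `v¹ ∝ v²` then for every `i` either `Γ^i(v¹) ∝ Γ^i(v²)` or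
`Γ^{i+1}(v¹) ∝ Γ^{i+1}(v²)`. -/
theorem amicable_shift (v1 v2 : ℕ → Bool) (h : AmicableInf v1 v2) (i : ℕ) :
    AmicableInf (fun n => v1 (n + i)) (fun n => v2 (n + i)) ∨
      AmicableInf (fun n => v1 (n + (i+1))) (fun n => v2 (n + (i+1))) := by
  induction i using Nat.strong_induction_on generalizing v1 v2 with
  | _ i ih =>
    match i with
    | 0 => exact Or.inl h
    | 1 => exact h.shift_one_or_two
    | j + 2 =>
      rcases h.shift_one_or_two with h' | h'
      · exact ih (j + 1) (by omega) _ _ h'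
      · exact ih j (by omega) _ _ h'
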